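/- Let X = c₀(ℤ) or X = ℓ^p(ℤ) for some p ∈ [1,∞). There exists a bounded sequence w = (w_j)_{j∈ℤ} of scalars with inf_{j∈ℤ} |w_j| > 0 such that the bilateral weighted backward shift B_w : (x_j)_{j∈ℤ} ↦ (w_{j+1}x_{j+1})_{j∈ℤ} is an invertible bounded operator on X that is topologically transitive, and both B_w and B_w⁻¹ are average positively expansive and distributionally chaotic. -/

import Mathlib

open Filter Topology
open scoped ZeroAtInfty ENNReal

/-- A map `T` on a topological space is topologically transitive if for every pair of
nonempty open sets `A, B` there is `n ∈ ℕ₀` with `Tⁿ(A) ∩ B ≠ ∅`. -/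
def TopologicallyTransitive {X : Type*} [TopologicalSpace X] (T : X → X) : Prop :=
  ∀ A B : Set X, IsOpen A → IsOpen B → A.Nonempty → B.Nonempty →
    ∃ n : ℕ, (T^[n] '' A ∩ B).Nonempty

/-- The upper density of a set `A ⊆ ℕ`: `limsup_{n→∞} card(A ∩ [1,n]) / n`. -/
noncomputable def upperDensity (A : Set ℕ) : ℝ :=
  Filter.limsup (fun n : ℕ => ((A ∩ Set.Icc 1 n).ncard : ℝ) / n) Filter.atTop

/-- An operator `T` on a normed space is average positively expansive if
`sup_{n ∈ ℕ} n⁻¹ ∑_{j=0}^{n-1} ‖Tʲ x‖ = ∞` for every `x ≠ 0`. -/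
def AvgPosExpansiveNorm {X : Type*} [NormedAddCommGroup X] (T : X → X) : Prop :=
  ∀ x : X, x ≠ 0 → ∀ C : ℝ, ∃ n : ℕ, 0 < n ∧ C < (n : ℝ)⁻¹ * ∑ j ∈ Finset.range n, ‖T^[j] x‖

/-- An operator `T` on a normed space is distributionally chaotic if there exist an
uncountable set `Γ` and `ε > 0` such that every pair of distinct points `x, y ∈ Γ` is a
distributionally chaotic pair for `T`. -/
def DistributionallyChaotic {X : Type*} [NormedAddCommGroup X] (T : X → X) : Prop :=
  ∃ (Γ : Set X) (ε : ℝ), 0 < ε ∧ ¬ Γ.Countable ∧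
    ∀ x ∈ Γ, ∀ y ∈ Γ, x ≠ y →
      upperDensity {n : ℕ | ε ≤ ‖T^[n] x - T^[n] y‖} = 1 ∧
      ∀ τ : ℝ, 0 < τ → upperDensity {n : ℕ | ‖T^[n] x - T^[n] y‖ < τ} = 1

/-!
Fix `c` with `1 < ‖c‖` and put `v j = c ^ profile j`, where `profile : ℤ → ℤ` is even and
`1`-Lipschitz. The operator `(T x) j = v j / v (j + 1) * x (j + 1)` is the translation conjugated by
the multiplication by `v`; it is the weighted backward shift with weights `w j = v (j - 1) / v j`,
and it satisfies `‖T ^ n e k‖ = ‖v (k - n)‖ / ‖v k‖` and `‖T ^ (-n) e k‖ = ‖v (k + n)‖ / ‖v k‖`.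
By the Lipschitz bound and evenness, all of these are comparable to `‖v n‖`.

The profile is `h (log₂ log₂ |j|)`, where `h` moves by unit steps and is unbounded in both
directions. It is constant on blocks `[P, P²)`, and such a block fills almost all of `[1, P²]`.
Hence `‖v n‖` is arbitrarily large, and arbitrarily small, along sets of upper density one. The
first property makes the averages of every nonzero orbit unbounded, both together make `e 0`
distributionally irregular, so that the line `𝕜 e 0` is scrambled, and along times with `‖v n‖ → 0`
the iterates of `T` and of `T⁻¹` both tend to zero on the span of the `e k`, which gives
transitivity.
-/

/-! ### Upper density -/

section UpperDensity

/-- The proportion of `A` in `[1, n]`, whose upper limit is the upper density of `A`. At `n = 0` it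
is `0`, by the convention `x / 0 = 0`. -/
noncomputable def partialDensity (A : Set ℕ) (n : ℕ) : ℝ := ((A ∩ Set.Icc 1 n).ncard : ℝ) / n

variable {A B : Set ℕ}

lemma partialDensity_nonneg (A : Set ℕ) (n : ℕ) : 0 ≤ partialDensity A n := by
  unfold partialDensity
  positivity

lemma partialDensity_le_one (A : Set ℕ) (n : ℕ) : partialDensity A n ≤ 1 := by
  refine div_le_one_of_le₀ ?_ n.cast_nonneg
  have hcard := Set.ncard_le_ncard (Set.inter_subset_right (s := A)) (Set.finite_Icc 1 n)
  simpa [Set.ncard_eq_toFinset_card'] using hcard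

lemma partialDensity_mono (h : A ⊆ B) (n : ℕ) : partialDensity A n ≤ partialDensity B n := by
  have hfin : (B ∩ Set.Icc 1 n).Finite := (Set.finite_Icc 1 n).inter_of_right B
  unfold partialDensity
  gcongr

lemma isBoundedUnder_le_partialDensity (A : Set ℕ) :
    IsBoundedUnder (· ≤ ·) atTop (partialDensity A) :=
  isBoundedUnder_of ⟨1, partialDensity_le_one A⟩

lemma isCoboundedUnder_le_partialDensity (A : Set ℕ) :
    IsCoboundedUnder (· ≤ ·) atTop (partialDensity A) :=
  (isBoundedUnder_of ⟨0, partialDensity_nonneg A⟩).isCoboundedUnder_le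

lemma upperDensity_le_one (A : Set ℕ) : upperDensity A ≤ 1 :=
  limsup_le_of_le (isCoboundedUnder_le_partialDensity A)
    (Eventually.of_forall (partialDensity_le_one A))

lemma upperDensity_mono (h : A ⊆ B) : upperDensity A ≤ upperDensity B :=
  limsup_le_limsup (Eventually.of_forall (partialDensity_mono h))
    (isCoboundedUnder_le_partialDensity A) (isBoundedUnder_le_partialDensity B)

lemma upperDensity_eq_one_of_subset (hA : upperDensity A = 1) (h : A ⊆ B) : upperDensity B = 1 :=
  (upperDensity_le_one B).antisymm (hA ▸ upperDensity_mono h)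

lemma exists_lt_partialDensity {δ : ℝ} (h : δ < upperDensity A) :
    ∃ n, 0 < n ∧ δ < partialDensity A n := by
  have hfreq := frequently_lt_of_lt_limsup (isCoboundedUnder_le_partialDensity A) h
  obtain ⟨n, hn, hpos⟩ := (hfreq.and_eventually (eventually_gt_atTop 0)).exists
  exact ⟨n, hpos, hn⟩

lemma nonempty_of_upperDensity_pos (h : 0 < upperDensity A) : A.Nonempty := by
  obtain ⟨n, -, hn⟩ := exists_lt_partialDensity h
  by_contra hA
  simp [partialDensity, Set.not_nonempty_iff_eq_empty.mp hA] at hn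

lemma one_sub_inv_le_partialDensity {P : ℕ} (hP : 0 < P) (h : Set.Ico P (P * P) ⊆ A) :
    1 - (P : ℝ)⁻¹ ≤ partialDensity A (P * P) := by
  have hsub : Set.Ico P (P * P) ⊆ A ∩ Set.Icc 1 (P * P) := fun n hn =>
    ⟨h hn, hP.trans_le hn.1, hn.2.le⟩
  have hcard : P * P - P ≤ (A ∩ Set.Icc 1 (P * P)).ncard := by
    simpa [Set.ncard_eq_toFinset_card'] using
      Set.ncard_le_ncard hsub ((Set.finite_Icc 1 (P * P)).inter_of_right A)
  have hP0 : (P : ℝ) ≠ 0 := by exact_mod_cast hP.ne'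
  calc 1 - (P : ℝ)⁻¹ = ((P * P - P : ℕ) : ℝ) / (P * P : ℕ) := by
        rw [Nat.cast_sub (Nat.le_mul_self P), Nat.cast_mul, sub_div, div_self (mul_ne_zero hP0 hP0),
          div_mul_cancel_left₀ hP0]
    _ ≤ partialDensity A (P * P) := by
        unfold partialDensity
        gcongr

lemma upperDensity_eq_one_of_frequently_Ico_subset
    (h : ∃ᶠ P : ℕ in atTop, Set.Ico P (P * P) ⊆ A) : upperDensity A = 1 := by
  refine (upperDensity_le_one A).antisymm (le_of_forall_lt fun δ hδ => ?_)
  obtain ⟨δ', hδδ', hδ'⟩ := exists_between hδ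
  have hlim : Tendsto (fun P : ℕ => 1 - (P : ℝ)⁻¹) atTop (𝓝 1) := by
    simpa using tendsto_inv_atTop_nhds_zero_nat.const_sub (1 : ℝ)
  have hfreq : ∃ᶠ P : ℕ in atTop, δ' ≤ partialDensity A (P * P) :=
    (h.and_eventually ((hlim.eventually_const_le hδ').and (eventually_gt_atTop 0))).mono
      fun P ⟨hsub, hle, hpos⟩ => hle.trans (one_sub_inv_le_partialDensity hpos hsub)
  have hsq : Tendsto (fun P : ℕ => P * P) atTop atTop := tendsto_id.atTop_mul_atTop₀ tendsto_id
  exact hδδ'.trans_le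
    (le_limsup_of_frequently_le (hsq.frequently hfreq) (isBoundedUnder_le_partialDensity A))

lemma log_log_eq_of_mem_Ico {m n : ℕ} (hm : m ≠ 0)
    (hn : n ∈ Set.Ico (2 ^ 2 ^ m) (2 ^ 2 ^ m * 2 ^ 2 ^ m)) : Nat.log 2 (Nat.log 2 n) = m := by
  have hn0 : n ≠ 0 := (Nat.two_pow_pos _).trans_le hn.1 |>.ne'
  rw [Nat.log_eq_iff (Or.inl hm)]
  refine ⟨Nat.le_log_of_pow_le one_lt_two hn.1, Nat.log_lt_of_lt_pow hn0 ?_⟩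
  rw [pow_succ, mul_two, pow_add]
  exact hn.2

lemma upperDensity_log_log_eq_one {p : ℕ → Prop} (h : ∃ᶠ m in atTop, p m) :
    upperDensity {n | p (Nat.log 2 (Nat.log 2 n))} = 1 := by
  have htends : Tendsto (fun m : ℕ => 2 ^ 2 ^ m) atTop atTop :=
    (tendsto_pow_atTop_atTop_of_one_lt one_lt_two).comp
      (tendsto_pow_atTop_atTop_of_one_lt one_lt_two)
  refine upperDensity_eq_one_of_frequently_Ico_subset (htends.frequently ?_)
  refine (h.and_eventually (eventually_ne_atTop 0)).mono fun m ⟨hpm, hm⟩ n hn => ?_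
  rwa [Set.mem_ofPred_eq, log_log_eq_of_mem_Ico hm hn]

end UpperDensity

/-! ### Oscillating sequences -/

section Oscillation

/-- A real sequence oscillates distributionally if it is arbitrarily large, and arbitrarily close
to zero (for nonnegative sequences), along sets of times of upper density one. Applied to the norms
of an orbit this is the notion of a distributionally irregular vector. -/
structure DistributionallyOscillating (a : ℕ → ℝ) : Prop where
  upperDensity_ge : ∀ M : ℝ, upperDensity {n | M ≤ a n} = 1
  upperDensity_lt : ∀ τ : ℝ, 0 < τ → upperDensity {n | a n < τ} = 1

lemma DistributionallyOscillating.const_mul {a : ℕ → ℝ} (ha : DistributionallyOscillating a)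
    {c : ℝ} (hc : 0 < c) : DistributionallyOscillating fun n => c * a n where
  upperDensity_ge M := by simpa only [div_le_iff₀' hc] using ha.upperDensity_ge (M / c)
  upperDensity_lt τ hτ := by
    simpa only [lt_div_iff₀' hc] using ha.upperDensity_lt (τ / c) (div_pos hτ hc)

lemma DistributionallyOscillating.exists_tendsto_zero {a : ℕ → ℝ}
    (ha : DistributionallyOscillating a) (ha0 : ∀ n, 0 ≤ a n) :
    ∃ l : Filter ℕ, l.NeBot ∧ Tendsto a l (𝓝 0) := by
  refine ⟨comap a (𝓝 0), comap_neBot_iff.mpr fun t ht => ?_, tendsto_comap⟩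
  obtain ⟨τ, hτ, hball⟩ := Metric.mem_nhds_iff.mp ht
  obtain ⟨n, hn⟩ := nonempty_of_upperDensity_pos (ha.upperDensity_lt τ hτ ▸ one_pos)
  refine ⟨n, hball ?_⟩
  simpa [abs_of_nonneg (ha0 n)] using hn

lemma exists_lt_average_of_lt_upperDensity {a : ℕ → ℝ} (ha : ∀ n, 0 ≤ a n) {δ : ℝ} (hδ : 0 < δ)
    (h : ∀ M : ℝ, δ < upperDensity {n | M ≤ a n}) (C : ℝ) :
    ∃ n : ℕ, 0 < n ∧ C < (n : ℝ)⁻¹ * ∑ j ∈ Finset.range n, a j := by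
  classical
  set D : ℝ := |C| + 1
  obtain ⟨n, hn, hdens⟩ := exists_lt_partialDensity (h (2 * D / δ))
  let S : Finset ℕ := (Finset.Icc 1 n).filter fun k => 2 * D / δ ≤ a k
  have hcard : δ * n < S.card := by
    have hS : {k | 2 * D / δ ≤ a k} ∩ Set.Icc 1 n = S := by ext k; simp [S, and_comm]
    rwa [partialDensity, hS, Set.ncard_coe_finset, lt_div_iff₀ (by exact_mod_cast hn)] at hdens
  have hsub : S ⊆ Finset.range (n + 1) := fun k hk => by
    rw [Finset.mem_range, Nat.lt_succ_iff]
    exact (Finset.mem_Icc.mp (Finset.mem_filter.mp hk).1).2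
  have hn1 : (1 : ℝ) ≤ n := by exact_mod_cast hn
  refine ⟨n + 1, n.succ_pos, ?_⟩
  rw [lt_inv_mul_iff₀ (by positivity)]
  calc ((n + 1 : ℕ) : ℝ) * C ≤ ((n + 1 : ℕ) : ℝ) * D := by
        gcongr
        exact (le_abs_self C).trans (lt_add_one _).le
    _ ≤ δ * n * (2 * D / δ) := by
        have hD : 0 ≤ D := by positivity
        field_simp
        push_cast
        nlinarith
    _ < S.card * (2 * D / δ) := by gcongr
    _ = ∑ j ∈ S, 2 * D / δ := by simp
    _ ≤ ∑ j ∈ S, a j := Finset.sum_le_sum fun j hj => (Finset.mem_filter.mp hj).2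
    _ ≤ ∑ j ∈ Finset.range (n + 1), a j :=
        Finset.sum_le_sum_of_subset_of_nonneg hsub fun j _ _ => ha j

end Oscillation

/-! ### Dynamics of linear operators -/

section Dynamics

lemma avgPosExpansiveNorm_of_lt_upperDensity {X : Type*} [NormedAddCommGroup X] {T : X → X}
    {δ : ℝ} (hδ : 0 < δ)
    (h : ∀ x : X, x ≠ 0 → ∀ M : ℝ, δ < upperDensity {n | M ≤ ‖T^[n] x‖}) :
    AvgPosExpansiveNorm T :=
  fun x hx => exists_lt_average_of_lt_upperDensity (fun _ => norm_nonneg _) hδ (h x hx)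

lemma iterate_linearMap_smul {R X : Type*} [Semiring R] [AddCommMonoid X] [Module R X]
    (T : X →ₗ[R] X) (n : ℕ) (c : R) (x : X) : T^[n] (c • x) = c • T^[n] x :=
  (show Function.Commute T (c • ·) from map_smul T c).iterate_left n x

lemma distributionallyChaotic_of_oscillating {𝕜 X : Type*} [NormedField 𝕜] [Uncountable 𝕜]
    [NormedAddCommGroup X] [NormedSpace 𝕜 X] (T : X →ₗ[𝕜] X) {x : X}
    (hx : DistributionallyOscillating fun n => ‖T^[n] x‖) : DistributionallyChaotic T := by
  have hx0 : x ≠ 0 := by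
    rintro rfl
    obtain ⟨n, hn⟩ := nonempty_of_upperDensity_pos (hx.upperDensity_ge 1 ▸ one_pos)
    rw [Set.mem_ofPred_eq, iterate_map_zero, norm_zero] at hn
    exact hn.not_gt one_pos
  refine ⟨Set.range fun r : 𝕜 => r • x, 1, one_pos, fun hcount => ?_, ?_⟩
  · exact Set.not_countable_univ
      (Set.countable_of_injective_of_countable_image (smul_left_injective 𝕜 hx0).injOn
        (Set.image_univ ▸ hcount))
  · rintro _ ⟨r, rfl⟩ _ ⟨s, rfl⟩ hne
    have hrs : 0 < ‖r - s‖ := norm_pos_iff.mpr (sub_ne_zero.mpr fun h => hne (by simp only [h]))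
    have hnorm (n : ℕ) : ‖T^[n] (r • x) - T^[n] (s • x)‖ = ‖r - s‖ * ‖T^[n] x‖ := by
      rw [iterate_linearMap_smul, iterate_linearMap_smul, ← sub_smul, norm_smul]
    simp only [hnorm]
    have hosc := hx.const_mul hrs
    exact ⟨hosc.upperDensity_ge 1, hosc.upperDensity_lt⟩

/-- A case of the hypercyclicity criterion: `x + Sⁿ y` is close to `x`, and its image under `Tⁿ` is
close to `y`. -/
lemma topologicallyTransitive_of_tendsto_zero {X F : Type*} [AddMonoid X] [TopologicalSpace X]
    [ContinuousAdd X] [FunLike F X X] [AddMonoidHomClass F X X] (T : F) {S : X → X}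
    (hTS : Function.LeftInverse T S) {D : Set X} (hD : Dense D) {l : Filter ℕ} [l.NeBot]
    (hT : ∀ x ∈ D, Tendsto (fun n => T^[n] x) l (𝓝 0))
    (hS : ∀ x ∈ D, Tendsto (fun n => S^[n] x) l (𝓝 0)) : TopologicallyTransitive T := by
  intro A B hA hB hA0 hB0
  obtain ⟨x, hxA, hx⟩ := hD.inter_open_nonempty A hA hA0
  obtain ⟨y, hyB, hy⟩ := hD.inter_open_nonempty B hB hB0
  have hstart : Tendsto (fun n => x + S^[n] y) l (𝓝 x) := by simpa using (hS y hy).const_add x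
  have hend : Tendsto (fun n => T^[n] x + y) l (𝓝 y) := by simpa using (hT x hx).add_const y
  obtain ⟨n, hnA, hnB⟩ := ((hstart.eventually (hA.mem_nhds hxA)).and
    (hend.eventually (hB.mem_nhds hyB))).exists
  refine ⟨n, T^[n] x + y, ⟨_, hnA, ?_⟩, hnB⟩
  rw [iterate_map_add, hTS.iterate n y]

lemma tendsto_iterate_zero_of_mem_span {R X : Type*} [Semiring R] [AddCommMonoid X] [Module R X]
    [TopologicalSpace X] [ContinuousAdd X] [ContinuousConstSMul R X] (T : X →ₗ[R] X) {E : Set X}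
    {l : Filter ℕ} (hE : ∀ x ∈ E, Tendsto (fun n => T^[n] x) l (𝓝 0)) {x : X}
    (hx : x ∈ Submodule.span R E) : Tendsto (fun n => T^[n] x) l (𝓝 0) := by
  induction hx using Submodule.span_induction with
  | mem x hx => exact hE x hx
  | zero => simp only [iterate_map_zero, tendsto_const_nhds]
  | add x y _ _ hx hy => simpa only [iterate_map_add, add_zero] using hx.add hy
  | smul c x _ hx => simpa only [iterate_linearMap_smul, smul_zero] using hx.const_smul c

end Dynamics

/-! ### Weighted shifts on solid sequence spaces -/

section ConjTranslation

variable {𝕜 X : Type*} [NormedField 𝕜] [NormedAddCommGroup X] [NormedSpace 𝕜 X]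

/-- A moderate weight: a nonvanishing `v : ℤ → 𝕜` each of whose translates is dominated by a
multiple of `v`. Conjugating a translation by the multiplication by such a `v` gives a bounded
operator. -/
structure IsModerate (v : ℤ → 𝕜) : Prop where
  ne_zero : ∀ j, v j ≠ 0
  translate_le : ∀ k, ∃ K > 0, ∀ j, ‖v (j + k)‖ ≤ K * ‖v j‖

/-- The common features of `c₀(ℤ)` and `ℓ^p(ℤ)`: the normalized vectors `e k` form an unconditional
basis of `X` with coordinate functionals `φ · k`, and the coordinate sequences form a solid and
translation-invariant space. -/
structure IsShiftSolid (φ : X →ₗ[𝕜] (ℤ → 𝕜)) (e : ℤ → X) : Prop where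
  hasSum : ∀ x, HasSum (fun k => φ x k • e k) x
  map_basis : ∀ k, φ (e k) = Pi.single k 1
  norm_basis : ∀ k, ‖e k‖ = 1
  exists_of_le : ∀ (x : X) (f : ℤ → 𝕜) (C : ℝ), 0 ≤ C → (∀ j, ‖f j‖ ≤ C * ‖φ x j‖) →
    ∃ y, φ y = f ∧ ‖y‖ ≤ C * ‖x‖
  exists_translate : ∀ (x : X) (s : ℤ), ∃ y, (∀ j, φ y j = φ x (j + s)) ∧ ‖y‖ ≤ ‖x‖

/-- `T` is the translation by `s` conjugated by the multiplication by `v`, read through the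
coordinates `φ`. For `s = 1` this is the weighted backward shift with weights
`w j = v (j - 1) / v j`, and for `s = -1` it is the inverse of that shift. -/
def IsConjTranslation (φ : X →ₗ[𝕜] (ℤ → 𝕜)) (v : ℤ → 𝕜) (s : ℤ) (T : X → X) : Prop :=
  ∀ x j, φ (T x) j = v j / v (j + s) * φ x (j + s)

variable {φ : X →ₗ[𝕜] (ℤ → 𝕜)} {e : ℤ → X} {v : ℤ → 𝕜} {s t : ℤ} {S T : X → X}

lemma IsModerate.exists_norm_div_mem_Icc (hv : IsModerate v) (s : ℤ) :
    ∃ K > 0, ∀ j, ‖v j / v (j + s)‖ ∈ Set.Icc K⁻¹ K := by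
  obtain ⟨K, hK, hle⟩ := hv.translate_le s
  obtain ⟨L, -, hge⟩ := hv.translate_le (-s)
  refine ⟨max K L, lt_max_of_lt_left hK, fun j => ?_⟩
  have hpos : 0 < ‖v (j + s)‖ := norm_pos_iff.mpr (hv.ne_zero _)
  rw [norm_div, Set.mem_Icc, le_div_iff₀ hpos, div_le_iff₀ hpos,
    inv_mul_le_iff₀ (lt_max_of_lt_left hK)]
  constructor
  · exact (hle j).trans (by gcongr; exact le_max_left K L)
  · have hback := hge (j + s)
    rw [add_neg_cancel_right] at hback
    exact hback.trans (by gcongr; exact le_max_right K L)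

namespace IsConjTranslation

lemma comp (hv : IsModerate v) (hS : IsConjTranslation φ v s S) (hT : IsConjTranslation φ v t T) :
    IsConjTranslation φ v (s + t) (S ∘ T) := fun x j => by
  rw [Function.comp_apply, hS, hT, ← mul_assoc, add_assoc,
    div_mul_div_cancel₀ (hv.ne_zero (j + s))]

lemma iterate (hv : IsModerate v) (hT : IsConjTranslation φ v s T) (n : ℕ) :
    IsConjTranslation φ v (n * s) T^[n] := by
  induction n with
  | zero => intro x j; simp [hv.ne_zero j]
  | succ n ih =>
    rw [Function.iterate_succ, Nat.cast_succ, add_one_mul]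
    exact ih.comp hv hT

end IsConjTranslation

namespace IsShiftSolid

lemma injective (H : IsShiftSolid φ e) : Function.Injective φ := fun x y hxy =>
  (H.hasSum x).unique (hxy ▸ H.hasSum y)

lemma dense_span (H : IsShiftSolid φ e) : Dense (Submodule.span 𝕜 (Set.range e) : Set X) :=
  fun x => mem_closure_of_tendsto (H.hasSum x) <| Eventually.of_forall fun _ =>
    Submodule.sum_mem _ fun _ _ => Submodule.smul_mem _ _ (Submodule.subset_span ⟨_, rfl⟩)

lemma norm_apply_le (H : IsShiftSolid φ e) (x : X) (k : ℤ) : ‖φ x k‖ ≤ ‖x‖ := by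
  obtain ⟨y, hy, hyx⟩ := H.exists_of_le x (Pi.single k (φ x k)) 1 zero_le_one fun j => by
    rcases eq_or_ne j k with rfl | hj
    · simp
    · simp [hj]
  have hye : y = φ x k • e k := H.injective <| by
    rw [hy, map_smul, H.map_basis, ← Pi.single_smul, smul_eq_mul, mul_one]
  rwa [hye, norm_smul, H.norm_basis, mul_one, one_mul] at hyx

lemma exists_weightedTranslation (H : IsShiftSolid φ e) {u : ℤ → 𝕜} {C : ℝ}
    (hu : ∀ j, ‖u j‖ ≤ C) (s : ℤ) :
    ∃ T : X →L[𝕜] X, ∀ x j, φ (T x) j = u j * φ x (j + s) := by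
  have hC : 0 ≤ C := (norm_nonneg _).trans (hu 0)
  have hex (x : X) : ∃ y, (∀ j, φ y j = u j * φ x (j + s)) ∧ ‖y‖ ≤ C * ‖x‖ := by
    obtain ⟨x', hx', hle⟩ := H.exists_translate x s
    obtain ⟨y, hy, hyle⟩ := H.exists_of_le x' (fun j => u j * φ x (j + s)) C hC fun j => by
      rw [norm_mul, hx']
      gcongr
      exact hu j
    exact ⟨y, congrFun hy, hyle.trans (by gcongr)⟩
  choose T hT hle using hex
  let L : X →ₗ[𝕜] X :=
    { toFun := T
      map_add' := fun x y => H.injective <| funext fun j => by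
        simp only [map_add, hT, Pi.add_apply, mul_add]
      map_smul' := fun c x => H.injective <| funext fun j => by
        simp only [map_smul, hT, Pi.smul_apply, smul_eq_mul, RingHom.id_apply, mul_left_comm] }
  exact ⟨L.mkContinuous C hle, hT⟩

lemma leftInverse_of_isConjTranslation (H : IsShiftSolid φ e) (hv : IsModerate v)
    (hS : IsConjTranslation φ v s S) (hT : IsConjTranslation φ v (-s) T) :
    Function.LeftInverse S T := fun x => H.injective <| funext fun j => by
  simpa [hv.ne_zero j] using hS.comp hv hT x j

lemma exists_isConjTranslation (H : IsShiftSolid φ e) (hv : IsModerate v) (s : ℤ) :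
    ∃ T : X ≃L[𝕜] X, IsConjTranslation φ v s T ∧ IsConjTranslation φ v (-s) T.symm := by
  have hex (t : ℤ) : ∃ T : X →L[𝕜] X, IsConjTranslation φ v t T := by
    obtain ⟨K, -, hK⟩ := hv.exists_norm_div_mem_Icc t
    exact H.exists_weightedTranslation (fun j => (hK j).2) t
  obtain ⟨S, hS⟩ := hex s
  obtain ⟨R, hR⟩ := hex (-s)
  refine ⟨ContinuousLinearEquiv.equivOfInverse S R ?_ ?_, hS, hR⟩
  · exact H.leftInverse_of_isConjTranslation hv hR (by rwa [neg_neg])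
  · exact H.leftInverse_of_isConjTranslation hv hS hR

lemma norm_apply_basis (H : IsShiftSolid φ e) (hT : IsConjTranslation φ v s T) (k : ℤ) :
    ‖T (e k)‖ = ‖v (k - s)‖ / ‖v k‖ := by
  have hTe : T (e k) = (v (k - s) / v k) • e (k - s) := H.injective <| funext fun j => by
    rw [hT, map_smul, Pi.smul_apply, H.map_basis, H.map_basis, smul_eq_mul]
    rcases eq_or_ne j (k - s) with rfl | hj
    · simp
    · rw [Pi.single_eq_of_ne hj, Pi.single_eq_of_ne (fun h => hj (eq_sub_of_add_eq h)), mul_zero,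
        mul_zero]
  rw [hTe, norm_smul, H.norm_basis, mul_one, norm_div]

lemma exists_norm_iterate_basis_le (H : IsShiftSolid φ e) (hv : IsModerate v)
    (hT : IsConjTranslation φ v s T) (k : ℤ) :
    ∃ C, ∀ n : ℕ, ‖T^[n] (e k)‖ ≤ C * ‖v (-(n * s))‖ := by
  obtain ⟨K, -, hK⟩ := hv.translate_le k
  refine ⟨K / ‖v k‖, fun n => ?_⟩
  rw [H.norm_apply_basis (hT.iterate hv n), div_mul_eq_mul_div, ← neg_add_eq_sub]
  gcongr
  exact hK _

lemma exists_le_norm_iterate (H : IsShiftSolid φ e) (hv : IsModerate v)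
    (hT : IsConjTranslation φ v s T) {x : X} (hx : x ≠ 0) :
    ∃ c > 0, ∀ n : ℕ, c * ‖v (-(n * s))‖ ≤ ‖T^[n] x‖ := by
  obtain ⟨k, hk⟩ : ∃ k, φ x k ≠ 0 := Function.ne_iff.mp ((map_ne_zero_iff φ H.injective).mpr hx)
  obtain ⟨K, hK, hle⟩ := hv.translate_le (-k)
  have hvk : 0 < ‖v k‖ := norm_pos_iff.mpr (hv.ne_zero k)
  refine ⟨‖φ x k‖ / (K * ‖v k‖), by positivity, fun n => ?_⟩
  have htranslate : ‖v (-(n * s))‖ ≤ K * ‖v (k - n * s)‖ := by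
    simpa [sub_add_eq_add_sub] using hle (k - n * s)
  calc ‖φ x k‖ / (K * ‖v k‖) * ‖v (-(n * s))‖
      ≤ ‖φ x k‖ / (K * ‖v k‖) * (K * ‖v (k - n * s)‖) := by gcongr
    _ = ‖φ (T^[n] x) (k - n * s)‖ := by
        rw [hT.iterate hv n, sub_add_cancel, norm_mul, norm_div]
        field_simp
    _ ≤ ‖T^[n] x‖ := H.norm_apply_le _ _

lemma avgPosExpansiveNorm (H : IsShiftSolid φ e) (hv : IsModerate v)
    (hT : IsConjTranslation φ v s T)
    (hlarge : ∀ M : ℝ, upperDensity {n : ℕ | M ≤ ‖v (-(n * s))‖} = 1) :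
    AvgPosExpansiveNorm T := by
  refine avgPosExpansiveNorm_of_lt_upperDensity one_half_pos fun x hx M => ?_
  obtain ⟨c, hc, hle⟩ := H.exists_le_norm_iterate hv hT hx
  have hfull : upperDensity {n | M ≤ ‖T^[n] x‖} = 1 :=
    upperDensity_eq_one_of_subset (hlarge (M / c)) fun n hn =>
      ((div_le_iff₀' hc).mp hn).trans (hle n)
  rw [hfull]
  exact one_half_lt_one

lemma distributionallyChaotic [Uncountable 𝕜] (H : IsShiftSolid φ e) (hv : IsModerate v)
    {T : X →ₗ[𝕜] X} (hT : IsConjTranslation φ v s T)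
    (hosc : DistributionallyOscillating fun n : ℕ => ‖v (-(n * s))‖) :
    DistributionallyChaotic T := by
  refine distributionallyChaotic_of_oscillating T (x := e 0) ?_
  have horbit (n : ℕ) : ‖T^[n] (e 0)‖ = ‖v 0‖⁻¹ * ‖v (-(n * s))‖ := by
    rw [H.norm_apply_basis (hT.iterate hv n), zero_sub, div_eq_inv_mul]
  simpa only [horbit] using hosc.const_mul (inv_pos.mpr (norm_pos_iff.mpr (hv.ne_zero 0)))

lemma tendsto_iterate_zero (H : IsShiftSolid φ e) (hv : IsModerate v)
    {T : X →ₗ[𝕜] X} (hT : IsConjTranslation φ v s T) {l : Filter ℕ}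
    (hl : Tendsto (fun n : ℕ => ‖v (-(n * s))‖) l (𝓝 0)) {x : X}
    (hx : x ∈ Submodule.span 𝕜 (Set.range e)) : Tendsto (fun n => T^[n] x) l (𝓝 0) := by
  refine tendsto_iterate_zero_of_mem_span T (Set.forall_mem_range.mpr fun k => ?_) hx
  obtain ⟨C, hC⟩ := H.exists_norm_iterate_basis_le hv hT k
  exact squeeze_zero_norm hC (by simpa using hl.const_mul C)

lemma topologicallyTransitive (H : IsShiftSolid φ e) (hv : IsModerate v) {T : X ≃L[𝕜] X}
    (hT : IsConjTranslation φ v s T) (hT' : IsConjTranslation φ v (-s) T.symm) {l : Filter ℕ}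
    [l.NeBot] (hl : Tendsto (fun n : ℕ => ‖v (-(n * s))‖) l (𝓝 0))
    (hl' : Tendsto (fun n : ℕ => ‖v (-(n * -s))‖) l (𝓝 0)) : TopologicallyTransitive T :=
  topologicallyTransitive_of_tendsto_zero T T.apply_symm_apply H.dense_span
    (fun _ hx => H.tendsto_iterate_zero hv (T := T.toLinearMap) hT hl hx)
    (fun _ hx => H.tendsto_iterate_zero hv (T := T.symm.toLinearMap) hT' hl' hx)

end IsShiftSolid

end ConjTranslation

/-! ### The profile of the weights -/

section Profile

/-- The path with steps `±1` starting at `0` that changes direction exactly at the powers of two, so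
that its turning points are unbounded in both directions. -/
def zigzag (m : ℕ) : ℤ := ∑ i ∈ Finset.range m, (-1) ^ Nat.log 2 i

lemma abs_zigzag_succ_sub (m : ℕ) : |zigzag (m + 1) - zigzag m| = 1 := by
  simp [zigzag, Finset.sum_range_succ]

lemma zigzag_two_pow_succ (k : ℕ) : zigzag (2 ^ (k + 1)) = zigzag (2 ^ k) + (-2) ^ k := by
  have hlog : ∀ i ∈ Finset.Ico (2 ^ k) (2 ^ (k + 1)), (-1 : ℤ) ^ Nat.log 2 i = (-1) ^ k := by
    intro i hi
    rw [Finset.mem_Ico] at hi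
    rw [Nat.log_eq_of_pow_le_of_lt_pow hi.1 hi.2]
  have hle : 2 ^ k ≤ 2 ^ (k + 1) := Nat.pow_le_pow_right two_pos k.le_succ
  rw [zigzag, ← Finset.sum_range_add_sum_Ico _ hle, Finset.sum_congr rfl hlog, ← zigzag,
    Finset.sum_const, Nat.card_Ico, pow_succ, mul_two, Nat.add_sub_cancel, nsmul_eq_mul,
    Nat.cast_pow, ← mul_pow]
  norm_num

lemma three_mul_zigzag_two_pow (k : ℕ) : 3 * zigzag (2 ^ k) = 4 - (-2) ^ k := by
  induction k with
  | zero => simp [zigzag]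
  | succ k ih => rw [zigzag_two_pow_succ, mul_add, ih]; ring

lemma frequently_le_zigzag (K : ℕ) : ∃ᶠ m in atTop, (K : ℤ) ≤ zigzag m := by
  refine frequently_atTop.mpr fun N => ?_
  have hlt : N + 3 * K < 2 ^ (2 * (N + 3 * K) + 1) :=
    Nat.lt_two_pow_self.trans (Nat.pow_lt_pow_right one_lt_two (by omega))
  have hpeak := three_mul_zigzag_two_pow (2 * (N + 3 * K) + 1)
  rw [Odd.neg_pow (odd_two_mul_add_one _)] at hpeak
  refine ⟨2 ^ (2 * (N + 3 * K) + 1), by omega, ?_⟩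
  zify at hlt
  linarith

lemma frequently_zigzag_le (K : ℕ) : ∃ᶠ m in atTop, zigzag m ≤ -(K : ℤ) := by
  refine frequently_atTop.mpr fun N => ?_
  have hlt : N + 3 * K + 4 < 2 ^ (2 * (N + 3 * K + 4)) :=
    Nat.lt_two_pow_self.trans (Nat.pow_lt_pow_right one_lt_two (by omega))
  have htrough := three_mul_zigzag_two_pow (2 * (N + 3 * K + 4))
  rw [Even.neg_pow (even_two_mul _)] at htrough
  refine ⟨2 ^ (2 * (N + 3 * K + 4)), by omega, ?_⟩
  zify at hlt
  linarith

lemma log_two_succ_eq_or (n : ℕ) :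
    Nat.log 2 (n + 1) = Nat.log 2 n ∨ Nat.log 2 (n + 1) = Nat.log 2 n + 1 := by
  rcases Nat.eq_zero_or_pos n with rfl | hn
  · simp
  · have hge : Nat.log 2 n ≤ Nat.log 2 (n + 1) := Nat.log_mono_right n.le_succ
    have hle : Nat.log 2 (n + 1) ≤ Nat.log 2 (n * 2) := Nat.log_mono_right (by omega)
    rw [Nat.log_mul_base one_lt_two hn.ne'] at hle
    omega

lemma abs_zigzag_log_log_succ_sub_le (n : ℕ) :
    |zigzag (Nat.log 2 (Nat.log 2 (n + 1))) - zigzag (Nat.log 2 (Nat.log 2 n))| ≤ 1 := by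
  rcases log_two_succ_eq_or n with h | h
  · simp [h]
  · rcases log_two_succ_eq_or (Nat.log 2 n) with h' | h'
    · simp [h, h']
    · rw [h, h', abs_zigzag_succ_sub]

/-- The exponents of the weight `j ↦ c ^ profile j` from which the shift is built. The double
logarithm makes the profile constant on blocks `[P, P²)`. -/
def profile (j : ℤ) : ℤ := zigzag (Nat.log 2 (Nat.log 2 j.natAbs))

lemma profile_neg (j : ℤ) : profile (-j) = profile j := by rw [profile, profile, Int.natAbs_neg]

lemma abs_profile_succ_sub_le (j : ℤ) : |profile (j + 1) - profile j| ≤ 1 := by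
  have hstep : (j + 1).natAbs = j.natAbs + 1 ∨ j.natAbs = (j + 1).natAbs + 1 := by omega
  rcases hstep with h | h
  · rw [profile, profile, h]
    exact abs_zigzag_log_log_succ_sub_le _
  · rw [profile, profile, h, abs_sub_comm]
    exact abs_zigzag_log_log_succ_sub_le _

lemma abs_apply_add_natCast_sub_le {h : ℤ → ℤ} (hstep : ∀ j, |h (j + 1) - h j| ≤ 1) (j : ℤ)
    (n : ℕ) : |h (j + n) - h j| ≤ n := by
  induction n with
  | zero => simp
  | succ n ih =>
    rw [Nat.cast_succ, ← add_assoc, add_comm (n : ℤ) 1]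
    exact (abs_sub_le _ (h (j + n)) _).trans (add_le_add (hstep _) ih)

lemma profile_add_le (j k : ℤ) : profile (j + k) ≤ k.natAbs + profile j := by
  have hforward := abs_apply_add_natCast_sub_le abs_profile_succ_sub_le j k.natAbs
  have hbackward := abs_apply_add_natCast_sub_le abs_profile_succ_sub_le (j + k) k.natAbs
  rcases Int.natAbs_eq k with h | h
  · rw [← h] at hforward
    linarith [le_abs_self (profile (j + k) - profile j)]
  · rw [show j + k + k.natAbs = j by omega] at hbackward
    linarith [neg_abs_le (profile j - profile (j + k))]

lemma upperDensity_le_profile (K : ℕ) : upperDensity {n : ℕ | (K : ℤ) ≤ profile n} = 1 := by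
  simpa only [profile, Int.natAbs_natCast] using
    upperDensity_log_log_eq_one (p := fun m => (K : ℤ) ≤ zigzag m) (frequently_le_zigzag K)

lemma upperDensity_profile_le (K : ℕ) : upperDensity {n : ℕ | profile n ≤ -(K : ℤ)} = 1 := by
  simpa only [profile, Int.natAbs_natCast] using
    upperDensity_log_log_eq_one (p := fun m => zigzag m ≤ -(K : ℤ)) (frequently_zigzag_le K)

variable {𝕜 : Type*} [NormedField 𝕜] {c : 𝕜}

lemma isModerate_zpow_profile (hc : 1 < ‖c‖) : IsModerate fun j => c ^ profile j := by
  have hc0 : c ≠ 0 := norm_pos_iff.mp (one_pos.trans hc)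
  refine ⟨fun j => zpow_ne_zero _ hc0, fun k => ⟨‖c‖ ^ (k.natAbs : ℤ), by positivity, fun j => ?_⟩⟩
  rw [norm_zpow, norm_zpow, ← zpow_add₀ (norm_ne_zero_iff.mpr hc0)]
  exact zpow_le_zpow_right₀ hc.le (profile_add_le j k)

lemma distributionallyOscillating_zpow_profile (hc : 1 < ‖c‖) :
    DistributionallyOscillating fun n : ℕ => ‖c ^ profile n‖ where
  upperDensity_ge M := by
    obtain ⟨K, hK⟩ := pow_unbounded_of_one_lt M hc
    refine upperDensity_eq_one_of_subset (upperDensity_le_profile K) fun n hn => ?_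
    rw [Set.mem_ofPred_eq, norm_zpow]
    rw [← zpow_natCast] at hK
    exact hK.le.trans (zpow_le_zpow_right₀ hc.le hn)
  upperDensity_lt τ hτ := by
    obtain ⟨K, hK⟩ := pow_unbounded_of_one_lt τ⁻¹ hc
    refine upperDensity_eq_one_of_subset (upperDensity_profile_le K) fun n hn => ?_
    rw [Set.mem_ofPred_eq, norm_zpow]
    refine (zpow_le_zpow_right₀ hc.le hn).trans_lt ?_
    rwa [zpow_neg, zpow_natCast, inv_lt_comm₀ (by positivity) hτ]

end Profile

/-! ### The spaces `c₀(ℤ)` and `ℓ^p(ℤ)` -/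

section ZeroAtInfty

variable {ι 𝕜 : Type*} [TopologicalSpace ι] [NormedField 𝕜]

lemma c0_norm_le {x : C₀(ι, 𝕜)} {C : ℝ} (hC : 0 ≤ C) (h : ∀ k, ‖x k‖ ≤ C) : ‖x‖ ≤ C :=
  (BoundedContinuousFunction.norm_le (f := x.toBCF) hC).mpr h

lemma c0_norm_apply_le (x : C₀(ι, 𝕜)) (k : ι) : ‖x k‖ ≤ ‖x‖ := x.toBCF.norm_coe_le_norm k

variable (ι 𝕜) in
/-- The coordinates of an element of `C₀(ι, 𝕜)`, as a linear map. -/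
def c0Coord : C₀(ι, 𝕜) →ₗ[𝕜] (ι → 𝕜) where
  toFun x := x
  map_add' _ _ := rfl
  map_smul' _ _ := rfl

lemma c0Coord_apply (x : C₀(ι, 𝕜)) : c0Coord ι 𝕜 x = x := rfl

variable [DiscreteTopology ι]

lemma tendsto_cofinite_c0 (x : C₀(ι, 𝕜)) : Tendsto x cofinite (𝓝 0) :=
  cocompact_eq_cofinite ι ▸ zero_at_infty x

/-- The element of `C₀(ι, 𝕜)`, for discrete `ι`, with the given coordinates. -/
def c0OfTendsto (f : ι → 𝕜) (hf : Tendsto f cofinite (𝓝 0)) : C₀(ι, 𝕜) where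
  toFun := f
  continuous_toFun := continuous_of_discreteTopology
  zero_at_infty' := by rwa [cocompact_eq_cofinite]

variable [DecidableEq ι]

variable (𝕜) in
/-- The canonical unit vectors of `C₀(ι, 𝕜)`, for discrete `ι`. -/
def c0Single (k : ι) : C₀(ι, 𝕜) :=
  c0OfTendsto (Pi.single k 1) <| tendsto_nhds_of_eventually_eq <|
    (Set.finite_singleton k).eventually_cofinite_notMem.mono fun _ hj => Pi.single_eq_of_ne hj 1

lemma c0Coord_c0Single (k : ι) : c0Coord ι 𝕜 (c0Single 𝕜 k) = Pi.single k 1 := rfl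

lemma norm_c0Single (k : ι) : ‖c0Single 𝕜 k‖ = 1 := by
  have happly (j : ι) : c0Single 𝕜 k j = (Pi.single k 1 : ι → 𝕜) j := rfl
  apply le_antisymm
  · refine c0_norm_le zero_le_one fun j => ?_
    rcases eq_or_ne j k with rfl | hj
    · simp [happly]
    · simp [happly, hj]
  · simpa [happly] using c0_norm_apply_le (c0Single 𝕜 k) k

lemma sum_smul_c0Single_apply (x : ι → 𝕜) (F : Finset ι) (j : ι) :
    (∑ k ∈ F, x k • c0Single 𝕜 k) j = if j ∈ F then x j else 0 := by
  rw [← c0Coord_apply, map_sum, Finset.sum_apply]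
  simp only [map_smul, c0Coord_c0Single, Pi.smul_apply, Pi.single_apply, smul_eq_mul, mul_ite,
    mul_one, mul_zero, Finset.sum_ite_eq]

lemma hasSum_c0Single (x : C₀(ι, 𝕜)) : HasSum (fun k => x k • c0Single 𝕜 k) x := by
  refine Metric.tendsto_nhds.mpr fun ε hε => ?_
  have hfin : {j | ¬ ‖x j‖ < ε / 2}.Finite :=
    (tendsto_zero_iff_norm_tendsto_zero.mp (tendsto_cofinite_c0 x)).eventually_lt_const
      (half_pos hε)
  refine eventually_atTop.mpr ⟨hfin.toFinset, fun F hF => ?_⟩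
  rw [dist_eq_norm']
  refine (c0_norm_le (half_pos hε).le fun j => ?_).trans_lt (half_lt_self hε)
  rw [ZeroAtInftyContinuousMap.sub_apply, sum_smul_c0Single_apply]
  split_ifs with hj
  · simpa using (half_pos hε).le
  · have hlt : ‖x j‖ < ε / 2 := by
      by_contra hge
      exact hj (hF (hfin.mem_toFinset.mpr hge))
    simpa using hlt.le

lemma isShiftSolid_c0 : IsShiftSolid (c0Coord ℤ 𝕜) (c0Single 𝕜) where
  hasSum := hasSum_c0Single
  map_basis := c0Coord_c0Single
  norm_basis := norm_c0Single
  exists_of_le x f C hC hf := by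
    have hlim : Tendsto (fun j => C * ‖x j‖) cofinite (𝓝 0) := by
      simpa using (tendsto_cofinite_c0 x).norm.const_mul C
    refine ⟨c0OfTendsto f (squeeze_zero_norm hf hlim), rfl, c0_norm_le (by positivity) fun j => ?_⟩
    exact (hf j).trans (by gcongr; exact c0_norm_apply_le x j)
  exists_translate x s :=
    ⟨c0OfTendsto (fun j => x (j + s))
      ((tendsto_cofinite_c0 x).comp (add_left_injective s).tendsto_cofinite),
      fun _ => rfl, c0_norm_le (norm_nonneg x) fun j => c0_norm_apply_le x (j + s)⟩

end ZeroAtInfty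

section Lp

variable {ι 𝕜 : Type*} [NormedField 𝕜] {p : ℝ≥0∞}

variable (ι 𝕜 p) in
/-- The coordinates of an element of `ℓ^p(ι)`, as a linear map. -/
def lpCoord : lp (fun _ : ι => 𝕜) p →ₗ[𝕜] (ι → 𝕜) where
  toFun x := x
  map_add' _ _ := rfl
  map_smul' _ _ := rfl

lemma lpCoord_apply (x : lp (fun _ : ι => 𝕜) p) : lpCoord ι 𝕜 p x = x := rfl

lemma exists_lp_eq_of_le (hp : p ≠ 0) (x : lp (fun _ : ι => 𝕜) p) (f : ι → 𝕜) {C : ℝ} (hC : 0 ≤ C)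
    (hf : ∀ j, ‖f j‖ ≤ C * ‖x j‖) : ∃ y : lp (fun _ : ι => 𝕜) p, y = f ∧ ‖y‖ ≤ C * ‖x‖ := by
  have hmem : Memℓp f p := (lp.memℓp (C • lp.toNorm x)).mono hf
  refine ⟨⟨f, hmem⟩, rfl, ?_⟩
  calc ‖(⟨f, hmem⟩ : lp (fun _ : ι => 𝕜) p)‖ ≤ ‖C • lp.toNorm x‖ :=
        lp.norm_mono hp fun j => (hf j).trans (le_abs_self _)
    _ = C * ‖x‖ := by rw [lp.norm_const_smul hp, Real.norm_of_nonneg hC, lp.norm_toNorm]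

lemma exists_lp_comp_equiv (hp : 0 < p.toReal) {κ : Type*} (σ : κ ≃ ι)
    (x : lp (fun _ : ι => 𝕜) p) :
    ∃ y : lp (fun _ : κ => 𝕜) p, (∀ j, y j = x (σ j)) ∧ ‖y‖ = ‖x‖ := by
  have hsum : Summable fun j => ‖x (σ j)‖ ^ p.toReal :=
    σ.summable_iff.mpr ((lp.memℓp x).summable hp)
  refine ⟨⟨fun j => x (σ j), memℓp_gen hsum⟩, fun _ => rfl, ?_⟩
  rw [lp.norm_eq_tsum_rpow hp, lp.norm_eq_tsum_rpow hp]
  congr 1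
  exact σ.tsum_eq fun j => ‖x j‖ ^ p.toReal

lemma isShiftSolid_lp [Fact (1 ≤ p)] (hp : p ≠ ∞) :
    IsShiftSolid (lpCoord ℤ 𝕜 p) fun k => lp.single p k 1 where
  hasSum x := by
    have hterm (k : ℤ) : lpCoord ℤ 𝕜 p x k • lp.single (E := fun _ => 𝕜) p k 1 =
        lp.single p k (x k) := by
      rw [← lp.single_smul, smul_eq_mul, mul_one, lpCoord_apply]
    simpa only [hterm] using lp.hasSum_single hp x
  map_basis k := lp.coeFn_single p k 1
  norm_basis k := by rw [lp.norm_single (zero_lt_one.trans_le Fact.out), norm_one]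
  exists_of_le x f C hC hf := exists_lp_eq_of_le (zero_lt_one.trans_le Fact.out).ne' x f hC hf
  exists_translate x s :=
    let ⟨y, hy, hyx⟩ := exists_lp_comp_equiv
      (ENNReal.toReal_pos (zero_lt_one.trans_le Fact.out).ne' hp) (Equiv.addRight s) x
    ⟨y, hy, hyx.le⟩

end Lp

theorem exists_weightedBackwardShift_transitive_avgPosExpansive_distChaotic_general
    (𝕜 : Type*) [NontriviallyNormedField 𝕜] [Uncountable 𝕜] :
    ∃ w : ℤ → 𝕜, (∃ M : ℝ, ∀ j, ‖w j‖ ≤ M) ∧ (∃ δ : ℝ, 0 < δ ∧ ∀ j, δ ≤ ‖w j‖) ∧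
      ∀ (X : Type*) [NormedAddCommGroup X] [NormedSpace 𝕜 X] (φ : X →ₗ[𝕜] (ℤ → 𝕜)) (e : ℤ → X),
        IsShiftSolid φ e →
        ∃ Bw : X ≃L[𝕜] X,
          (∀ (x : X) (j : ℤ), φ (Bw x) j = w (j + 1) * φ x (j + 1)) ∧
          TopologicallyTransitive ⇑Bw ∧
          AvgPosExpansiveNorm ⇑Bw ∧ AvgPosExpansiveNorm ⇑Bw.symm ∧
          DistributionallyChaotic ⇑Bw ∧ DistributionallyChaotic ⇑Bw.symm := by
  obtain ⟨c, hc⟩ := NormedField.exists_one_lt_norm 𝕜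
  let v : ℤ → 𝕜 := fun j => c ^ profile j
  have hv : IsModerate v := isModerate_zpow_profile hc
  have hosc : DistributionallyOscillating fun n : ℕ => ‖v n‖ :=
    distributionallyOscillating_zpow_profile hc
  have heven (n : ℕ) : v (-n) = v n := congrArg (c ^ ·) (profile_neg n)
  obtain ⟨l, hlbot, hl⟩ := hosc.exists_tendsto_zero fun n => norm_nonneg _
  obtain ⟨K, hK, hw⟩ := hv.exists_norm_div_mem_Icc 1
  refine ⟨fun j => v (j - 1) / v j, ⟨K, fun j => ?_⟩, ⟨K⁻¹, inv_pos.mpr hK, fun j => ?_⟩,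
    fun X _ _ φ e H => ?_⟩
  · simpa using (hw (j - 1)).2
  · simpa using (hw (j - 1)).1
  · obtain ⟨Bw, hB, hB'⟩ := H.exists_isConjTranslation hv 1
    refine ⟨Bw, fun x j => ?_, H.topologicallyTransitive hv hB hB' (l := l) ?_ ?_,
      H.avgPosExpansiveNorm hv hB ?_, H.avgPosExpansiveNorm hv hB' ?_,
      H.distributionallyChaotic hv (T := Bw.toLinearMap) hB ?_,
      H.distributionallyChaotic hv (T := Bw.symm.toLinearMap) hB' ?_⟩
    · simpa using hB x j
    all_goals simp only [mul_one, mul_neg, neg_neg, heven]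
    exacts [hl, hl, hosc.upperDensity_ge, hosc.upperDensity_ge, hosc, hosc]

/-- On `X = c₀(ℤ)` and on `X = ℓ^p(ℤ)` (`p ∈ [1,∞)`) there exists a bounded bilateral weight
sequence `w` with `inf_j |w_j| > 0` such that the bilateral weighted backward shift
`B_w : (x_j) ↦ (w_{j+1} x_{j+1})` is an invertible bounded operator on `X` which is
topologically transitive, and both `B_w` and `B_w⁻¹` are average positively expansive and
distributionally chaotic. -/
theorem exists_weightedBackwardShift_transitive_avgPosExpansive_distChaotic
    (𝕜 : Type*) [RCLike 𝕜] :
    (∃ w : ℤ → 𝕜, (∃ M : ℝ, ∀ j, ‖w j‖ ≤ M) ∧ (∃ δ : ℝ, 0 < δ ∧ ∀ j, δ ≤ ‖w j‖) ∧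
      ∃ Bw : C₀(ℤ, 𝕜) ≃L[𝕜] C₀(ℤ, 𝕜),
        (∀ (x : C₀(ℤ, 𝕜)) (j : ℤ), Bw x j = w (j + 1) * x (j + 1)) ∧
        TopologicallyTransitive ⇑Bw ∧
        AvgPosExpansiveNorm ⇑Bw ∧ AvgPosExpansiveNorm ⇑Bw.symm ∧
        DistributionallyChaotic ⇑Bw ∧ DistributionallyChaotic ⇑Bw.symm) ∧
    (∀ (p : ℝ≥0∞) [Fact (1 ≤ p)], p ≠ ∞ →
      ∃ w : ℤ → 𝕜, (∃ M : ℝ, ∀ j, ‖w j‖ ≤ M) ∧ (∃ δ : ℝ, 0 < δ ∧ ∀ j, δ ≤ ‖w j‖) ∧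
      ∃ Bw : lp (fun _ : ℤ => 𝕜) p ≃L[𝕜] lp (fun _ : ℤ => 𝕜) p,
        (∀ (x : lp (fun _ : ℤ => 𝕜) p) (j : ℤ), (Bw x : ∀ _ : ℤ, 𝕜) j = w (j + 1) * x (j + 1)) ∧
        TopologicallyTransitive ⇑Bw ∧
        AvgPosExpansiveNorm ⇑Bw ∧ AvgPosExpansiveNorm ⇑Bw.symm ∧
        DistributionallyChaotic ⇑Bw ∧ DistributionallyChaotic ⇑Bw.symm) := by
  have : Uncountable 𝕜 := (algebraMap ℝ 𝕜).injective.uncountable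
  obtain ⟨w, hM, hδ, h⟩ :=
    exists_weightedBackwardShift_transitive_avgPosExpansive_distChaotic_general 𝕜
  exact ⟨⟨w, hM, hδ, h _ _ _ isShiftSolid_c0⟩,
    fun p _ hp => ⟨w, hM, hδ, h _ _ _ (isShiftSolid_lp hp)⟩⟩
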